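/- Let n ≥ 1, let μ be the normalized Haar probability measure on the unitary group U(n), and let ν be the normalized Haar probability measure on the circle group {z ∈ ℂ : |z| = 1}. Then for every Borel set S ⊆ ℂ, the integral over U(n) (with respect to μ) of the number of eigenvalues of Q lying in S, counted with multiplicity, equals n times ν({z in the circle : (z : ℂ) ∈ S}). Equivalently, a generic eigenvalue of a Haar-distributed unitary matrix is uniformly distributed on the unit circle. -/

import Mathlib

open MeasureTheory
open scoped Classical ENNReal

noncomputable instance matrixMeasurableSpace {m n α : Type*} [MeasurableSpace α] :
    MeasurableSpace (Matrix m n α) :=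
  (inferInstance : MeasurableSpace (m → n → α))

/-- The Borel σ-algebra on the circle group. -/
noncomputable instance Circle.instMeasurableSpace : MeasurableSpace Circle :=
  borel Circle

instance Circle.instBorelSpace : BorelSpace Circle := ⟨rfl⟩

open Polynomial in
lemma aux_charpoly_smul {n : ℕ} (A : Matrix (Fin n) (Fin n) ℂ) (z : ℂ) (hz : z ≠ 0) :
    (z • A).charpoly = A.charpoly.scaleRoots z := by
  apply Polynomial.funext
  intro t
  obtain ⟨s, rfl⟩ : ∃ s, t = z * s := ⟨z⁻¹ * t, by field_simp⟩
  have h := Polynomial.scaleRoots_eval₂_mul (p := A.charpoly) (RingHom.id ℂ) s z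
  simp only [RingHom.id_apply, Polynomial.eval₂_id] at h
  rw [h, Matrix.charpoly_natDegree_eq_dim, Matrix.eval_charpoly, Matrix.eval_charpoly,
    ← Matrix.det_smul]
  congr 1
  ext i j
  simp [Matrix.scalar_apply, Matrix.diagonal_apply, mul_sub]

lemma aux_roots_smul {n : ℕ} (A : Matrix (Fin n) (Fin n) ℂ) (z : ℂ) (hz : z ≠ 0) :
    (z • A).charpoly.roots = A.charpoly.roots.map (z * ·) := by
  rw [aux_charpoly_smul A z hz, Polynomial.roots_scaleRoots]
  exact hz.isUnit

open scoped Matrix.Norms.L2Operator in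
lemma aux_norm_root {n : ℕ} (Q : Matrix.unitaryGroup (Fin n) ℂ) (z : ℂ)
    (hz : z ∈ (Q : Matrix (Fin n) (Fin n) ℂ).charpoly.roots) : ‖z‖ = 1 := by
  have h1 : z ∈ spectrum ℂ (Q : Matrix (Fin n) (Fin n) ℂ) :=
    Matrix.mem_spectrum_of_isRoot_charpoly (Polynomial.isRoot_of_mem_roots hz)
  have := spectrum.subset_circle_of_unitary (𝕜 := ℂ) Q.2 h1
  simpa using this

lemma aux_exists_eig {n : ℕ} (Q : Matrix.unitaryGroup (Fin n) ℂ) :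
    ∃ d : Fin n → Circle, (Q : Matrix (Fin n) (Fin n) ℂ).charpoly.roots =
      Finset.univ.val.map (fun i => (d i : ℂ)) := by
  have hc : (Q : Matrix (Fin n) (Fin n) ℂ).charpoly.roots.card = n := by
    rw [← (IsAlgClosed.splits _).natDegree_eq_card_roots, Matrix.charpoly_natDegree_eq_dim,
      Fintype.card_fin]
  have hn := aux_norm_root Q
  generalize (Q : Matrix (Fin n) (Fin n) ℂ).charpoly.roots = s at hc hn
  induction s using Quot.inductionOn with
  | _ l =>
    subst hc
    refine ⟨fun i => ⟨l.get i, ?_⟩, ?_⟩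
    · rw [Submonoid.unitSphere, ← SetLike.mem_coe]
      simpa using hn _ (List.get_mem l i)
    · rw [Fin.univ_val_map]
      exact congrArg _ (List.ofFn_get l).symm

/-- The eigenvalues of a unitary matrix. -/
noncomputable def auxEig {n : ℕ} (Q : Matrix.unitaryGroup (Fin n) ℂ) : Fin n → Circle :=
  (aux_exists_eig Q).choose

lemma aux_roots {n : ℕ} (Q : Matrix.unitaryGroup (Fin n) ℂ) :
    (Q : Matrix (Fin n) (Fin n) ℂ).charpoly.roots =
      Finset.univ.val.map (fun i => (auxEig Q i : ℂ)) :=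
  (aux_exists_eig Q).choose_spec

lemma aux_measurable_coeff {n : ℕ} (k : ℕ) :
    Measurable (fun Q : Matrix.unitaryGroup (Fin n) ℂ =>
      (Q : Matrix (Fin n) (Fin n) ℂ).charpoly.coeff k) := by
  have h : ∀ Q : Matrix.unitaryGroup (Fin n) ℂ,
      (Q : Matrix (Fin n) (Fin n) ℂ).charpoly.coeff k =
      MvPolynomial.eval (fun p : Fin n × Fin n => (Q : Matrix (Fin n) (Fin n) ℂ) p.1 p.2)
        ((Matrix.charpoly.univ ℂ (Fin n)).coeff k) := fun Q =>
    (Matrix.charpoly.univ_coeff_eval₂Hom (Fin n) (RingHom.id ℂ)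
      (fun p : Fin n × Fin n => (Q : Matrix (Fin n) (Fin n) ℂ) p.1 p.2) k).symm
  simp_rw [h]
  refine (MvPolynomial.continuous_eval _).measurable.comp ?_
  refine measurable_pi_lambda _ fun p => ?_
  exact (measurable_pi_apply (X := fun _ : Fin n => ℂ) p.2).comp
    ((measurable_pi_apply (X := fun _ : Fin n => Fin n → ℂ) p.1).comp measurable_subtype_coe)

lemma aux_measurable_esymm {n : ℕ} (k : ℕ) :
    Measurable (fun Q : Matrix.unitaryGroup (Fin n) ℂ =>
      MvPolynomial.aeval (fun i => (auxEig Q i : ℂ)) (MvPolynomial.esymm (Fin n) ℂ k)) := by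
  simp_rw [MvPolynomial.aeval_esymm_eq_multiset_esymm, ← aux_roots]
  by_cases hk : k ≤ n
  · have h : ∀ Q : Matrix.unitaryGroup (Fin n) ℂ,
        (Q : Matrix (Fin n) (Fin n) ℂ).charpoly.roots.esymm k =
        (-1) ^ k * (Q : Matrix (Fin n) (Fin n) ℂ).charpoly.coeff (n - k) := by
      intro Q
      have hd : (Q : Matrix (Fin n) (Fin n) ℂ).charpoly.natDegree = n := by
        rw [Matrix.charpoly_natDegree_eq_dim, Fintype.card_fin]
      rw [Polynomial.coeff_eq_esymm_roots_of_card
        ((IsAlgClosed.splits _).natDegree_eq_card_roots).symm (by rw [hd]; omega), hd,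
        (Matrix.charpoly_monic _).leadingCoeff, Nat.sub_sub_self hk, one_mul, ← mul_assoc,
        ← mul_pow]
      simp
    simp_rw [h]
    exact (aux_measurable_coeff _).const_mul _
  · have h : ∀ Q : Matrix.unitaryGroup (Fin n) ℂ,
        (Q : Matrix (Fin n) (Fin n) ℂ).charpoly.roots.esymm k = 0 := by
      intro Q
      have : (Q : Matrix (Fin n) (Fin n) ℂ).charpoly.roots.powersetCard k = 0 := by
        apply Multiset.powersetCard_eq_empty
        rw [aux_roots]; simp; omega
      simp [Multiset.esymm, this]
    simp_rw [h]
    exact measurable_const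

lemma aux_measurable_psum {n : ℕ} (k : ℕ) :
    Measurable (fun Q : Matrix.unitaryGroup (Fin n) ℂ => ∑ i, (auxEig Q i : ℂ) ^ k) := by
  have h : ∀ k, (fun Q : Matrix.unitaryGroup (Fin n) ℂ => ∑ i, (auxEig Q i : ℂ) ^ k) =
    fun Q => MvPolynomial.aeval (fun i => (auxEig Q i : ℂ)) (MvPolynomial.psum (Fin n) ℂ k) := by
    intro k; ext Q; simp [MvPolynomial.psum]
  rw [h]
  induction k using Nat.strong_induction_on with
  | _ k ih =>
    rcases Nat.eq_zero_or_pos k with rfl | hk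
    · rw [← h]; simp
    · rw [MvPolynomial.psum_eq_mul_esymm_sub_sum _ _ k hk]
      simp only [map_sub, map_mul, map_sum, map_pow, map_neg, map_one, map_natCast]
      refine ((aux_measurable_esymm k).const_mul _).sub ?_
      refine Finset.measurable_sum _ fun a ha => ?_
      refine ((aux_measurable_esymm _).const_mul _).mul (ih _ ?_)
      simp at ha
      omega

lemma aux_measurable_zpow {n : ℕ} (k : ℤ) :
    Measurable (fun Q : Matrix.unitaryGroup (Fin n) ℂ => ∑ i, ((auxEig Q i ^ k : Circle) : ℂ)) := by
  rcases Int.eq_nat_or_neg k with ⟨m, rfl | rfl⟩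
  · simpa using aux_measurable_psum m
  · have h : ∀ Q : Matrix.unitaryGroup (Fin n) ℂ,
      ∑ i, ((auxEig Q i ^ (-(m : ℤ)) : Circle) : ℂ) = star (∑ i, (auxEig Q i : ℂ) ^ m) := by
      intro Q
      rw [star_sum]
      refine Finset.sum_congr rfl fun i _ => ?_
      rw [zpow_neg, Circle.coe_inv_eq_conj]
      simp
    simp_rw [h]
    exact (continuous_star.measurable).comp (aux_measurable_psum m)

instance auxFact : Fact (0 < 2 * Real.pi) := ⟨by positivity⟩

lemma aux_measurable_addCircle {n : ℕ} (H : C(AddCircle (2 * Real.pi), ℂ)) :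
    Measurable (fun Q : Matrix.unitaryGroup (Fin n) ℂ =>
      ∑ i, H (AddCircle.homeomorphCircle'.symm (auxEig Q i))) := by
  have hH : H ∈ (Submodule.span ℂ
      (Set.range <| @fourier (2 * Real.pi))).topologicalClosure := by
    rw [span_fourier_closure_eq_top]; trivial
  rw [← SetLike.mem_coe, Submodule.topologicalClosure_coe, mem_closure_iff_seq_limit] at hH
  obtain ⟨u, hu, hlim⟩ := hH
  refine measurable_of_tendsto_metrizable (f := fun k Q =>
      ∑ i, u k (AddCircle.homeomorphCircle'.symm (auxEig Q i))) (fun k => ?_) ?_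
  · have hk := hu k
    generalize u k = g at hk
    rw [SetLike.mem_coe] at hk
    induction hk using Submodule.span_induction with
    | mem x hx =>
      obtain ⟨m, rfl⟩ := hx
      convert aux_measurable_zpow (n := n) m using 4 with Q i
      rw [fourier_apply, AddCircle.toCircle_zsmul]
      congr 2
      have := AddCircle.homeomorphCircle'.apply_symm_apply (auxEig Q i)
      conv_rhs => rw [← this]
      generalize AddCircle.homeomorphCircle'.symm (auxEig Q i) = y
      induction y using QuotientAddGroup.induction_on with
      | H r =>
        rw [AddCircle.homeomorphCircle'_apply_mk, AddCircle.toCircle_apply_mk]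
        congr 1
        field_simp
    | zero => simp
    | add x y _ _ hx hy =>
      simp only [ContinuousMap.add_apply, Finset.sum_add_distrib]
      exact hx.add hy
    | smul a x _ hx =>
      simp only [ContinuousMap.smul_apply, smul_eq_mul, ← Finset.mul_sum]
      exact hx.const_mul a
  · rw [tendsto_pi_nhds]
    intro Q
    refine tendsto_finsetSum _ fun i _ => ?_
    exact ((continuous_eval_const _).tendsto H).comp hlim

lemma aux_measurable_cont {n : ℕ} (f : C(Circle, ℂ)) :
    Measurable (fun Q : Matrix.unitaryGroup (Fin n) ℂ => ∑ i, f (auxEig Q i)) := by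
  have h := aux_measurable_addCircle (n := n)
    (f.comp ⟨AddCircle.homeomorphCircle', AddCircle.homeomorphCircle'.continuous⟩)
  simpa only [ContinuousMap.comp_apply, ContinuousMap.coe_mk, Homeomorph.apply_symm_apply] using h

lemma aux_measurable_nn {n : ℕ} (f : BoundedContinuousFunction Circle NNReal) :
    Measurable (fun Q : Matrix.unitaryGroup (Fin n) ℂ => ∑ i, (f (auxEig Q i) : ℝ≥0∞)) := by
  have h := (Complex.measurable_re.comp (aux_measurable_cont (n := n)
    ⟨fun z => ((f z : ℝ) : ℂ), by fun_prop⟩)).ennreal_ofReal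
  convert h using 2 with Q
  simp only [Function.comp, ContinuousMap.coe_mk, Complex.re_sum, Complex.ofReal_re]
  rw [ENNReal.ofReal_sum_of_nonneg (fun _ _ => NNReal.coe_nonneg _)]
  simp

lemma aux_measurable_closed {n : ℕ} (T : Set Circle) (hT : IsClosed T) :
    Measurable (fun Q : Matrix.unitaryGroup (Fin n) ℂ =>
      ∑ i, T.indicator (fun _ => (1 : ℝ≥0∞)) (auxEig Q i)) := by
  refine measurable_of_tendsto_metrizable (f := fun k Q =>
      ∑ i, (hT.apprSeq k (auxEig Q i) : ℝ≥0∞)) (fun k => aux_measurable_nn _) ?_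
  rw [tendsto_pi_nhds]
  intro Q
  refine tendsto_finsetSum _ fun i _ => ?_
  have h := tendsto_pi_nhds.1 (HasOuterApproxClosed.tendsto_apprSeq hT) (auxEig Q i)
  have h2 := (ENNReal.continuous_coe.tendsto _).comp h
  convert h2 using 2
  · rfl
  · by_cases hx : auxEig Q i ∈ T <;> simp [hx]

lemma aux_measurable_set {n : ℕ} (T : Set Circle) (hT : MeasurableSet T) :
    Measurable (fun Q : Matrix.unitaryGroup (Fin n) ℂ =>
      ∑ i, T.indicator (fun _ => (1 : ℝ≥0∞)) (auxEig Q i)) := by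
  induction T, hT using MeasurableSpace.induction_on_inter
    (borel_eq_generateFrom_isClosed (α := Circle)) isPiSystem_isClosed with
  | empty => simp
  | basic t ht => exact aux_measurable_closed t ht
  | compl t ht ih =>
    have : (fun Q : Matrix.unitaryGroup (Fin n) ℂ =>
      ∑ i, tᶜ.indicator (fun _ => (1 : ℝ≥0∞)) (auxEig Q i)) = fun Q => (n : ℝ≥0∞) -
        ∑ i, t.indicator (fun _ => (1 : ℝ≥0∞)) (auxEig Q i) := by
      ext Q
      have h1 : ∑ i, tᶜ.indicator (fun _ => (1 : ℝ≥0∞)) (auxEig Q i) +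
        ∑ i, t.indicator (fun _ => (1 : ℝ≥0∞)) (auxEig Q i) = n := by
        rw [← Finset.sum_add_distrib]
        have : ∀ i, tᶜ.indicator (fun _ => (1 : ℝ≥0∞)) (auxEig Q i) +
          t.indicator (fun _ => (1 : ℝ≥0∞)) (auxEig Q i) = 1 := by
          intro i
          by_cases h : auxEig Q i ∈ t <;> simp [h]
        simp [this]
      refine ENNReal.eq_sub_of_add_eq ?_ h1
      refine ENNReal.sum_ne_top.2 fun i _ => ?_
      simp only [Set.indicator]; split_ifs <;> simp
    rw [this]
    exact measurable_const.sub ih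
  | iUnion f hd hm ih =>
    have : (fun Q : Matrix.unitaryGroup (Fin n) ℂ =>
      ∑ i, (⋃ j, f j).indicator (fun _ => (1 : ℝ≥0∞)) (auxEig Q i)) = fun Q =>
        ∑' j, ∑ i, (f j).indicator (fun _ => (1 : ℝ≥0∞)) (auxEig Q i) := by
      ext Q
      rw [Summable.tsum_finsetSum (fun _ _ => ENNReal.summable)]
      refine Finset.sum_congr rfl fun i _ => ?_
      have h := measure_iUnion (μ := Measure.dirac (auxEig Q i)) hd hm
      rw [Measure.dirac_apply' _ (MeasurableSet.iUnion hm)] at h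
      simp_rw [fun j => Measure.dirac_apply' (auxEig Q i) (hm j)] at h
      exact h
    rw [this]
    exact Measurable.tsum ih

lemma aux_count {n : ℕ} (Q : Matrix.unitaryGroup (Fin n) ℂ) (S : Set ℂ) :
    ((((Q : Matrix (Fin n) (Fin n) ℂ).charpoly.roots.filter
        (fun z => z ∈ S)).card : ℕ) : ℝ≥0∞) =
    ∑ i, ((fun z : Circle => (z : ℂ)) ⁻¹' S).indicator (fun _ => (1 : ℝ≥0∞)) (auxEig Q i) := by
  rw [aux_roots, Multiset.filter_map, Multiset.card_map]
  simp only [Set.indicator, Set.mem_preimage, Finset.sum_boole]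
  rfl

lemma aux_sum_eq {n : ℕ} (Q : Matrix.unitaryGroup (Fin n) ℂ) (g : ℂ → ℝ≥0∞) :
    ((Q : Matrix (Fin n) (Fin n) ℂ).charpoly.roots.map g).sum = ∑ i, g (auxEig Q i) := by
  rw [aux_roots, Multiset.map_map]; rfl

/-- Scalar unitary matrix. -/
noncomputable def auxScal (n : ℕ) (z : Circle) : Matrix.unitaryGroup (Fin n) ℂ :=
  ⟨(z : ℂ) • 1, by
    rw [Matrix.mem_unitaryGroup_iff]
    have h : (z : ℂ) * star (z : ℂ) = 1 := by
      rw [Complex.star_def, Complex.mul_conj, Circle.normSq_coe, Complex.ofReal_one]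
    rw [star_smul, star_one, smul_mul_smul_comm, h, one_smul, one_mul]⟩

lemma aux_measurable_scal (n : ℕ) :
    Measurable (fun p : Circle × Matrix.unitaryGroup (Fin n) ℂ => auxScal n p.1 * p.2) := by
  refine Measurable.subtype_mk ?_
  refine measurable_pi_lambda _ fun i => measurable_pi_lambda _ fun j => ?_
  have : ∀ p : Circle × Matrix.unitaryGroup (Fin n) ℂ,
    ((auxScal n p.1 : Matrix (Fin n) (Fin n) ℂ) * (p.2 : Matrix (Fin n) (Fin n) ℂ)) i j =
     (p.1 : ℂ) * (p.2 : Matrix (Fin n) (Fin n) ℂ) i j := by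
    intro p; simp [auxScal]
  simp_rw [this]
  refine (Continuous.measurable (by fun_prop : Continuous (fun z : Circle => (z : ℂ)))|>.comp
    measurable_fst).mul ?_
  exact (measurable_pi_apply (X := fun _ : Fin n => ℂ) j).comp
    ((measurable_pi_apply (X := fun _ : Fin n => Fin n → ℂ) i).comp
      (measurable_subtype_coe.comp measurable_snd))

lemma aux_eig_scal {n : ℕ} (Q : Matrix.unitaryGroup (Fin n) ℂ) (z : Circle) (S : Set ℂ) :
    ∑ i, ((fun z : Circle => (z : ℂ)) ⁻¹' S).indicator (fun _ => (1 : ℝ≥0∞))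
      (auxEig (auxScal n z * Q) i) =
    ∑ i, ((fun z : Circle => (z : ℂ)) ⁻¹' S).indicator (fun _ => (1 : ℝ≥0∞))
      (z * auxEig Q i) := by
  have h1 := aux_sum_eq (auxScal n z * Q) (S.indicator (fun _ => (1 : ℝ≥0∞)))
  have h2 := aux_sum_eq Q (fun w => S.indicator (fun _ => (1 : ℝ≥0∞)) (z * w))
  have h3 : ((auxScal n z * Q : Matrix.unitaryGroup (Fin n) ℂ) : Matrix (Fin n) (Fin n) ℂ) =
    (z : ℂ) • (Q : Matrix (Fin n) (Fin n) ℂ) := by simp [auxScal]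
  rw [h3, aux_roots_smul _ _ z.coe_ne_zero, Multiset.map_map] at h1
  have h4 := h1.symm.trans h2
  simpa [Set.indicator] using h4

lemma aux_inner {n : ℕ} (ν : Measure Circle) [ν.IsHaarMeasure] (Q : Matrix.unitaryGroup (Fin n) ℂ)
    (T : Set Circle) (hT : MeasurableSet T) :
    ∫⁻ z, ∑ i, T.indicator (fun _ => (1 : ℝ≥0∞)) (z * auxEig Q i) ∂ν = (n : ℝ≥0∞) * ν T := by
  have hm : Measurable (T.indicator (fun _ => (1 : ℝ≥0∞))) := measurable_const.indicator hT
  rw [lintegral_finsetSum]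
  · have : ∀ i, ∫⁻ z, T.indicator (fun _ => (1 : ℝ≥0∞)) (z * auxEig Q i) ∂ν = ν T := by
      intro i
      rw [lintegral_mul_right_eq_self (T.indicator (fun _ => (1 : ℝ≥0∞))),
        lintegral_indicator_const hT, one_mul]
    simp [this]
  · intro i _
    exact hm.comp (measurable_mul_const _)

lemma aux_outer {n : ℕ} (μ : Measure (Matrix.unitaryGroup (Fin n) ℂ))
    [μ.IsMulLeftInvariant] [IsProbabilityMeasure μ]
    (ν : Measure Circle) [IsProbabilityMeasure ν]
    (F : Matrix.unitaryGroup (Fin n) ℂ → ℝ≥0∞) (hFm : Measurable F) :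
    ∫⁻ Q, F Q ∂μ = ∫⁻ Q, ∫⁻ z, F (auxScal n z * Q) ∂ν ∂μ := by
  have hmul : ∀ z : Circle,
      Measurable (fun Q : Matrix.unitaryGroup (Fin n) ℂ => auxScal n z * Q) := by
    intro z
    have h : Measurable (fun Q : Matrix.unitaryGroup (Fin n) ℂ => (z, Q)) :=
      measurable_prodMk_left
    have h2 := (aux_measurable_scal n).comp h
    simp only [Function.comp_def] at h2
    exact h2
  have hinv : ∀ z : Circle, ∫⁻ Q, F (auxScal n z * Q) ∂μ = ∫⁻ Q, F Q ∂μ := by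
    intro z
    have h := lintegral_map (μ := μ) hFm (hmul z)
    have h2 : Measure.map (fun Q => auxScal n z * Q) μ = μ :=
      Measure.IsMulLeftInvariant.map_mul_left_eq_self (auxScal n z)
    rw [h2] at h
    exact h.symm
  calc ∫⁻ Q, F Q ∂μ = ∫⁻ z, ∫⁻ Q, F (auxScal n z * Q) ∂μ ∂ν := by
        simp_rw [hinv]; simp
    _ = ∫⁻ Q, ∫⁻ z, F (auxScal n z * Q) ∂ν ∂μ := by
        refine lintegral_lintegral_swap ?_
        exact (hFm.comp (aux_measurable_scal n)).aemeasurable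

theorem haar_unitary_generic_eigenvalue_uniform (n : ℕ) (hn : 1 ≤ n)
    (μ : Measure (Matrix.unitaryGroup (Fin n) ℂ))
    [μ.IsHaarMeasure] [IsProbabilityMeasure μ]
    (ν : Measure Circle) [ν.IsHaarMeasure] [IsProbabilityMeasure ν]
    (S : Set ℂ) (hS : MeasurableSet S) :
    ∫⁻ Q, ((((Q : Matrix (Fin n) (Fin n) ℂ).charpoly.roots.filter
        (fun z => z ∈ S)).card : ℕ) : ℝ≥0∞) ∂μ
      = (n : ℝ≥0∞) * ν ((fun z : Circle => (z : ℂ)) ⁻¹' S) := by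
  have hT : MeasurableSet ((fun z : Circle => (z : ℂ)) ⁻¹' S) :=
    (Continuous.measurable (by fun_prop : Continuous (fun z : Circle => (z : ℂ)))) hS
  rw [lintegral_congr (fun Q => aux_count Q S), aux_outer μ ν _ (aux_measurable_set _ hT)]
  rw [lintegral_congr (fun Q => (lintegral_congr (fun z => aux_eig_scal Q z S)).trans
    (aux_inner ν Q _ hT))]
  simp
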